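/- Fix positive integers d, D, d_W and n ≥ 1. Let W₁, …, W_n : Fin d_W → Fin d_W → Matrix (Fin d) (Fin d) ℂ all be lower triangular ((W a b) = 0 whenever a < b) with (W_i) 0 0 = 1 for every i. Let B¹, …, Bⁿ : Fin d → Matrix (Fin D) (Fin D) ℂ be arbitrary MPS tensors and let l : Matrix (Fin D) (Fin D) ℂ satisfy the normalization: the trace of l ▷ E_{B¹} ▷ ⋯ ▷ E_{Bⁿ} equals 1. Define the boundary tensor L α a β = (if a = 0 then l α β else 0), and let R : Fin D → Fin d_W → Fin D → ℂ be any boundary tensor with R α 0 β = (if α = β then 1 else 0). Then ∑_{α,a,β} (L ▷ E_{B¹}^{W₁} ▷ ⋯ ▷ E_{Bⁿ}^{W_n}) α a β * R α a β = 1. -/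

import Mathlib

open Matrix

/-- Left action of the MPO transfer matrix `E_A^{[W]}` on a boundary tensor `L`. -/
noncomputable def mpoActL {d D dw : ℕ}
    (A : Fin d → Matrix (Fin D) (Fin D) ℂ)
    (W : Fin dw → Fin dw → Matrix (Fin d) (Fin d) ℂ)
    (L : Fin D → Fin dw → Fin D → ℂ) : Fin D → Fin dw → Fin D → ℂ :=
  fun α' a' β' =>
    ∑ α : Fin D, ∑ a : Fin dw, ∑ β : Fin D, ∑ s : Fin d, ∑ s' : Fin d,
      L α a β * (A s) α α' * (W a a') s s' * (starRingEnd ℂ) ((A s') β β')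

/-- Left action of the bare MPS transfer matrix `E_A` on a matrix `l`. -/
noncomputable def mpsActL {d D : ℕ}
    (A : Fin d → Matrix (Fin D) (Fin D) ℂ)
    (l : Matrix (Fin D) (Fin D) ℂ) : Matrix (Fin D) (Fin D) ℂ :=
  Matrix.of fun α' β' =>
    ∑ α : Fin D, ∑ β : Fin D, ∑ s : Fin d,
      l α β * (A s) α α' * (starRingEnd ℂ) ((A s) β β')

/-!
A lower triangular MPO tensor with `W 0 0 = 1` has row `(1, 0, …, 0)` at index `0`, so the transfer
matrix `E_A^{[W]}` preserves the boundary tensors supported on that index and acts on them as the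
bare transfer matrix `E_A`. The chain of MPO transfer matrices therefore collapses to the chain of
bare ones, and the right boundary enters only through its component at index `0`.
-/

section BoundaryAt

variable {d D dw : ℕ} {ι : Type*}

/-- The boundary tensor supported on the single MPO index `c`, with component `l` there. The left
generalized eigenvector `⟨l_{A_R}^{[W]}|` is the case `c = 0`. -/
def boundaryAt (c : Fin dw) (l : Matrix (Fin D) (Fin D) ℂ) : Fin D → Fin dw → Fin D → ℂ :=
  fun α a β => if a = c then l α β else 0

theorem sum_boundaryAt_mul (c : Fin dw) (l : Matrix (Fin D) (Fin D) ℂ)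
    (R : Fin D → Fin dw → Fin D → ℂ) :
    ∑ α, ∑ a, ∑ β, boundaryAt c l α a β * R α a β = ∑ α, ∑ β, l α β * R α c β := by
  refine Finset.sum_congr rfl fun α _ => ?_
  rw [Fintype.sum_eq_single c fun a ha => by simp [boundaryAt, ha]]
  simp [boundaryAt]

theorem mpoActL_boundaryAt_apply (A : Fin d → Matrix (Fin D) (Fin D) ℂ)
    (W : Fin dw → Fin dw → Matrix (Fin d) (Fin d) ℂ) (c : Fin dw)
    (l : Matrix (Fin D) (Fin D) ℂ) (α' : Fin D) (a' : Fin dw) (β' : Fin D) :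
    mpoActL A W (boundaryAt c l) α' a' β' =
      ∑ α, ∑ β, ∑ s, ∑ s', l α β * A s α α' * W c a' s s' * starRingEnd ℂ (A s' β β') := by
  refine Finset.sum_congr rfl fun α _ => ?_
  rw [Fintype.sum_eq_single c fun a ha => by simp [boundaryAt, ha]]
  simp [boundaryAt]

theorem mpoActL_boundaryAt (A : Fin d → Matrix (Fin D) (Fin D) ℂ)
    {W : Fin dw → Fin dw → Matrix (Fin d) (Fin d) ℂ} {c : Fin dw} (hW : W c = Pi.single c 1)
    (l : Matrix (Fin D) (Fin D) ℂ) :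
    mpoActL A W (boundaryAt c l) = boundaryAt c (mpsActL A l) := by
  ext α' a' β'
  rw [mpoActL_boundaryAt_apply, hW]
  obtain rfl | ha' := eq_or_ne a' c
  · simp [boundaryAt, mpsActL, Matrix.one_apply]
  · simp [boundaryAt, ha']

theorem foldl_mpoActL_boundaryAt (B : ι → Fin d → Matrix (Fin D) (Fin D) ℂ)
    {Ws : ι → Fin dw → Fin dw → Matrix (Fin d) (Fin d) ℂ} {c : Fin dw}
    (hWs : ∀ i, Ws i c = Pi.single c 1) (sites : List ι) (l : Matrix (Fin D) (Fin D) ℂ) :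
    sites.foldl (fun acc i => mpoActL (B i) (Ws i) acc) (boundaryAt c l) =
      boundaryAt c (sites.foldl (fun acc i => mpsActL (B i) acc) l) :=
  List.foldl_hom (boundaryAt c) fun l i => mpoActL_boundaryAt (B i) (hWs i) l

theorem row_zero_eq_single_of_lowerTriangular {dW : ℕ}
    {W : Fin (dW + 1) → Fin (dW + 1) → Matrix (Fin d) (Fin d) ℂ}
    (htri : ∀ a b, a < b → W a b = 0) (h00 : W 0 0 = 1) : W 0 = Pi.single 0 1 := by
  ext1 a
  obtain rfl | ha := eq_or_ne a 0
  · simp [h00]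
  · simp [ha, htri 0 a (Fin.pos_of_ne_zero ha)]

theorem lemma5_contraction_eq_one_general (B : ι → Fin d → Matrix (Fin D) (Fin D) ℂ)
    {Ws : ι → Fin dw → Fin dw → Matrix (Fin d) (Fin d) ℂ} {c : Fin dw}
    (hWs : ∀ i, Ws i c = Pi.single c 1) (sites : List ι) (l : Matrix (Fin D) (Fin D) ℂ)
    (R : Fin D → Fin dw → Fin D → ℂ) :
    ∑ α, ∑ a, ∑ β,
        sites.foldl (fun acc i => mpoActL (B i) (Ws i) acc) (boundaryAt c l) α a β * R α a β =
      ∑ α, ∑ β, sites.foldl (fun acc i => mpsActL (B i) acc) l α β * R α c β := by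
  rw [foldl_mpoActL_boundaryAt B hWs, sum_boundaryAt_mul]

end BoundaryAt

/-- Paper's Lemma 5: `⟨l_{A_R}^{[W]}| (∏ᵢ E_{Bᵢ}^{[Wᵢ]}) |R_Z^{[W]}⟩ = 1`,
given the normalization `⟨Ψ|Ψ⟩ = 1` (trace of the bare transferred `l` equals one) and
that the right boundary tensor has identity component at MPO index `0`. -/
theorem lemma5_contraction_eq_one
    (d D dW n : ℕ) (hd : 0 < d) (hD : 0 < D) (hn : 1 ≤ n)
    (Ws : Fin n → Fin (dW + 1) → Fin (dW + 1) → Matrix (Fin d) (Fin d) ℂ)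
    (hWstri : ∀ (i : Fin n) (a b : Fin (dW + 1)), a < b → Ws i a b = 0)
    (hWs00 : ∀ i : Fin n, Ws i 0 0 = 1)
    (B : Fin n → Fin d → Matrix (Fin D) (Fin D) ℂ)
    (l : Matrix (Fin D) (Fin D) ℂ)
    (hnorm : ∑ α : Fin D,
      ((List.finRange n).foldl (fun acc i => mpsActL (B i) acc) l) α α = 1)
    (R : Fin D → Fin (dW + 1) → Fin D → ℂ)
    (hR : ∀ α β : Fin D, R α 0 β = if α = β then 1 else 0) :
    ∑ α : Fin D, ∑ a : Fin (dW + 1), ∑ β : Fin D,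
        ((List.finRange n).foldl (fun acc i => mpoActL (B i) (Ws i) acc)
          (fun α a β => if a = 0 then l α β else 0)) α a β * R α a β
      = 1 := by
  refine (lemma5_contraction_eq_one_general B
    (fun i => row_zero_eq_single_of_lowerTriangular (hWstri i) (hWs00 i)) _ l R).trans ?_
  simpa [hR] using hnorm
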